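/- arXiv:1610.06760 — 3 statements merged into one kernel-verified Lean document; each statement's English description precedes it below -/
import Mathlib

section
/- Let f(z) = z + Σ_{n≥2} a_n zⁿ be analytic on the open unit disc 𝔻 with Re((1−z²)f′(z)) > 0 for all z ∈ 𝔻. Then for every integer k ≥ 1 and every real μ with μ ≥ (2k+1)²/(4k+1), one has |μ a_{2k+1}² − a_{4k+1}| ≤ μ − 1. -/
/-!
The function `g z = (1 - z ^ 2) * deriv f z` has nonnegative real part and `g 0 = 1`, so by Herglotz
its coefficients are `p n = 2 * ∫ ζ ^ (-n) ∂ν`, `n ≥ 1`, for a probability measure `ν` on the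
circle. Dividing `g` by `1 - z ^ 2` gives `(2 * k + 1) * a (2 * k + 1) = S k` with
`S k = p 0 + p 2 + ⋯ + p (2 * k)`. In terms of `U = ζ ^ (-2)`, `W = 1 + U + ⋯ + U ^ (k - 1)` and
`V = U * W` this is `S k = 1 + 2 * E[V]`, and summing the geometric progressions yields
`S k ^ 2 - S (2 * k) = 2 * E[V * W] - 2 * (E[V ^ 2] - 2 * E[V] ^ 2)`.
Both expectations on the right have modulus at most `k ^ 2`: the first trivially, the second
because `Y ↦ 2 * E[Y] - Y` is an isometry of `L²`. Hence `|S k ^ 2 - S (2 * k)| ≤ 4 * k ^ 2`, and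
also `|S k| ≤ 2 * k + 1`; the theorem follows by the triangle inequality.
-/

open AddCircle Filter Finset MeasureTheory Metric
open scoped ComplexConjugate NNReal Topology

section PowerSeries

variable {𝕜 : Type*} [RCLike 𝕜] {f : 𝕜 → 𝕜} {a : ℕ → 𝕜} {R : ℝ≥0}

lemma hasFPowerSeriesOnBall_ofScalars_of_hasSum (hR : 0 < R)
    (hf : ∀ z ∈ ball (0 : 𝕜) R, HasSum (fun n ↦ a n * z ^ n) (f z)) :
    HasFPowerSeriesOnBall f (.ofScalars 𝕜 a) 0 R where
  r_le := by
    refine ENNReal.le_of_forall_nnreal_lt fun r hr ↦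
      FormalMultilinearSeries.le_radius_of_summable _ ?_
    have hr_mem : ((r : ℝ) : 𝕜) ∈ ball (0 : 𝕜) R := by simpa using hr
    simpa [norm_mul] using (hf _ hr_mem).summable.norm
  r_pos := by simpa using hR
  hasSum {z} hz := by
    have hz_mem : z ∈ ball (0 : 𝕜) R := by simpa [Metric.eball_coe] using hz
    simpa [FormalMultilinearSeries.ofScalars_apply_eq, mul_comm] using hf z hz_mem

lemma hasSum_deriv_of_hasSum (hR : 0 < R)
    (hf : ∀ z ∈ ball (0 : 𝕜) R, HasSum (fun n ↦ a n * z ^ n) (f z)) {z : 𝕜}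
    (hz : z ∈ ball (0 : 𝕜) R) :
    HasSum (fun n : ℕ ↦ (n + 1) * a (n + 1) * z ^ n) (deriv f z) := by
  have hfderiv := (hasFPowerSeriesOnBall_ofScalars_of_hasSum hR hf).fderiv.hasSum
    (y := z) (by simpa [Metric.eball_coe] using hz)
  convert! hfderiv.mapL (ContinuousLinearMap.apply 𝕜 𝕜 (1 : 𝕜)) using 1
  · funext n
    simp [mul_comm]
  · simp

lemma hasSum_one_sub_pow_mul {𝕜 : Type*} [NormedField 𝕜] {b : ℕ → 𝕜} {z s : 𝕜}
    (hb : HasSum (fun n ↦ b n * z ^ n) s) (d : ℕ) :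
    HasSum (fun n ↦ (b n - if d ≤ n then b (n - d) else 0) * z ^ n) ((1 - z ^ d) * s) := by
  have hshift : HasSum (fun n ↦ (if d ≤ n then b (n - d) else 0) * z ^ n) (z ^ d * s) := by
    rw [← hasSum_nat_add_iff' d, sum_eq_zero fun n hn ↦ by simp [(mem_range.mp hn).not_ge],
      sub_zero]
    simpa [pow_add, mul_left_comm, mul_comm] using hb.mul_left (z ^ d)
  simpa only [sub_mul, one_mul] using hb.sub hshift

end PowerSeries

section Fourier

variable {T : ℝ} [Fact (0 < T)]

lemma fourierCoeff_conj (F : AddCircle T → ℂ) (n : ℤ) :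
    fourierCoeff (fun t ↦ conj (F t)) n = conj (fourierCoeff F (-n)) := by
  simp [fourierCoeff, ← integral_conj, fourier_neg, -fourier_apply]

lemma fourierCoeff_re {F : AddCircle T → ℂ} (hF : Integrable F haarAddCircle) (n : ℤ) :
    fourierCoeff (fun t ↦ ((F t).re : ℂ)) n =
      2⁻¹ * (fourierCoeff F n + conj (fourierCoeff F (-n))) := by
  have hconj : Integrable (fun t ↦ conj (F t)) haarAddCircle :=
    Complex.conjCLE.toContinuousLinearMap.integrable_comp hF
  rw [← fourierCoeff_conj, ← Pi.add_apply, ← fourierCoeff.add hF hconj, ← fourierCoeff.const_mul]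
  congr! 2 with t
  rw [Complex.re_eq_add_conj, Pi.add_apply, div_eq_inv_mul]

lemma hasSum_fourierCoeff_of_hasSum {ι : Type*} [Countable ι] {c : ι → ℂ} (hc : Summable c)
    {m : ι → ℤ} {F : AddCircle T → ℂ} (hF : ∀ t, HasSum (fun i ↦ c i * fourier (m i) t) (F t))
    (n : ℤ) :
    HasSum (fun i ↦ if m i = n then c i else 0) (fourierCoeff F n) := by
  have hint : HasSum (fun i ↦ fourierCoeff (fun t : AddCircle T ↦ c i * fourier (m i) t) n)
      (fourierCoeff F n) := by
    refine hasSum_integral_of_dominated_convergence (fun i _ ↦ ‖c i‖)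
      (fun i ↦ (by fun_prop : Continuous _).aestronglyMeasurable)
      (fun i ↦ .of_forall fun _ ↦ by simp [Circle.norm_coe]) (.of_forall fun _ ↦ hc.norm) (by simp)
      (.of_forall fun t ↦ (hF t).const_smul _)
  simpa [fourierCoeff.const_mul, fourierCoeff_fourier, Pi.single_apply, eq_comm, -fourier_apply]
    using hint

lemma fourierCoeff_comp_toCircle_of_hasSum {g : ℂ → ℂ} {p : ℕ → ℂ} {R r : ℝ}
    (hg : ∀ z ∈ ball (0 : ℂ) R, HasSum (fun n ↦ p n * z ^ n) (g z)) (hr : r ∈ Set.Ico 0 R)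
    (n : ℤ) :
    fourierCoeff (fun t : AddCircle T ↦ g (r * toCircle t)) n =
      if 0 ≤ n then p n.toNat * r ^ n.toNat else 0 := by
  have hmem (w : Circle) : r * (w : ℂ) ∈ ball (0 : ℂ) R := by
    simpa [Circle.norm_coe, abs_of_nonneg hr.1] using hr.2
  have hsummable : Summable fun j ↦ p j * (r : ℂ) ^ j := by
    simpa using (hg _ (hmem 1)).summable
  have hseries (t : AddCircle T) :
      HasSum (fun j : ℕ ↦ p j * (r : ℂ) ^ j * fourier j t) (g (r * toCircle t)) := by
    simpa [mul_pow, mul_assoc, toCircle_nsmul] using hg _ (hmem (toCircle t))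
  refine (hasSum_fourierCoeff_of_hasSum hsummable hseries n).unique ?_
  split_ifs with hn
  · lift n to ℕ using hn
    convert! hasSum_ite_eq n (p n * (r : ℂ) ^ n) using 2 with j
    grind
  · convert! hasSum_zero using 2 with j
    exact if_neg (by lia)

lemma exists_probabilityMeasure_integral_fourier_eq_fourierCoeff {h : AddCircle T → ℝ}
    (hint : Integrable h haarAddCircle) (hnonneg : 0 ≤ h)
    (hone : fourierCoeff (fun t ↦ (h t : ℂ)) 0 = 1) :
    ∃ ν : ProbabilityMeasure (AddCircle T), ∀ n : ℤ,
      ∫ t, fourier (-n) t ∂(ν : Measure (AddCircle T)) = fourierCoeff (fun t ↦ (h t : ℂ)) n := by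
  have hmass : ∫ t, h t ∂haarAddCircle = 1 := by
    have : ∫ t, (h t : ℂ) ∂haarAddCircle = 1 := by simpa [fourierCoeff] using hone
    rw [integral_complex_ofReal] at this
    exact_mod_cast this
  refine ⟨⟨haarAddCircle.withDensity fun t ↦ ENNReal.ofReal (h t), ⟨?_⟩⟩, fun n ↦ ?_⟩
  · rw [withDensity_apply _ .univ, setLIntegral_univ,
      ← ofReal_integral_eq_lintegral_ofReal hint (.of_forall hnonneg), hmass, ENNReal.ofReal_one]
  · rw [ProbabilityMeasure.coe_mk, integral_withDensity_eq_integral_toReal_smul₀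
      hint.aemeasurable.ennreal_ofReal (by simp)]
    simp [fourierCoeff, ENNReal.toReal_ofReal (hnonneg _), mul_comm, -fourier_apply]

end Fourier

section Moments

variable {Ω : Type*} {mΩ : MeasurableSpace Ω} {μ : Measure Ω} [IsProbabilityMeasure μ]

-- `Y ↦ 2 • E[Y] - Y` is the reflection of `L²` in the subspace of constants.
lemma integral_norm_sub_two_smul_integral_sq {E : Type*} [NormedAddCommGroup E]
    [InnerProductSpace ℝ E] [CompleteSpace E] {Y : Ω → E} (hY : MemLp Y 2 μ) :
    ∫ ω, ‖Y ω - (2 : ℝ) • ∫ ω', Y ω' ∂μ‖ ^ 2 ∂μ = ∫ ω, ‖Y ω‖ ^ 2 ∂μ := by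
  set m := ∫ ω, Y ω ∂μ
  have hYint : Integrable Y μ := hY.integrable one_le_two
  have hinner : ∫ ω, inner ℝ (Y ω) m ∂μ = ‖m‖ ^ 2 := by
    simp_rw [real_inner_comm m]
    rw [integral_inner hYint, real_inner_self_eq_norm_sq]
  have hexpand (ω : Ω) :
      ‖Y ω - (2 : ℝ) • m‖ ^ 2 = ‖Y ω‖ ^ 2 - 4 * inner ℝ (Y ω) m + 4 * ‖m‖ ^ 2 := by
    rw [norm_sub_sq_real, real_inner_smul_right, norm_smul, Real.norm_ofNat]
    ring
  have hsq : Integrable (fun ω ↦ ‖Y ω‖ ^ 2) μ := hY.integrable_norm_pow two_ne_zero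
  have hinner_int : Integrable (fun ω ↦ 4 * inner ℝ (Y ω) m) μ :=
    (hYint.inner_const m).const_mul 4
  calc ∫ ω, ‖Y ω - (2 : ℝ) • m‖ ^ 2 ∂μ
      = ∫ ω, (‖Y ω‖ ^ 2 - 4 * inner ℝ (Y ω) m + 4 * ‖m‖ ^ 2) ∂μ := by simp_rw [hexpand]
    _ = ∫ ω, ‖Y ω‖ ^ 2 ∂μ - 4 * ‖m‖ ^ 2 + 4 * ‖m‖ ^ 2 := by
        rw [integral_add (by fun_prop) (by fun_prop), integral_sub hsq hinner_int,
          integral_const_mul, hinner]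
        simp
    _ = ∫ ω, ‖Y ω‖ ^ 2 ∂μ := sub_add_cancel _ _

lemma sq_integral_le_integral_sq {Z : Ω → ℝ} (hZ : MemLp Z 2 μ) :
    (∫ ω, Z ω ∂μ) ^ 2 ≤ ∫ ω, Z ω ^ 2 ∂μ := by
  have := ProbabilityTheory.variance_nonneg Z μ
  rw [ProbabilityTheory.variance_eq_sub hZ] at this
  exact sub_nonneg.mp this

lemma integral_norm_sub_two_smul_integral_le {E : Type*} [NormedAddCommGroup E]
    [InnerProductSpace ℝ E] [CompleteSpace E] {Y : Ω → E} {B : ℝ}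
    (hY : AEStronglyMeasurable Y μ) (hB : ∀ᵐ ω ∂μ, ‖Y ω‖ ≤ B) :
    ∫ ω, ‖Y ω - (2 : ℝ) • ∫ ω', Y ω' ∂μ‖ ∂μ ≤ B := by
  have hB_nonneg : 0 ≤ B := by
    obtain ⟨ω, hω⟩ := hB.exists
    exact (norm_nonneg _).trans hω
  have hY2 : MemLp Y 2 μ := .of_bound hY B hB
  refine le_of_sq_le_sq ?_ hB_nonneg
  calc (∫ ω, ‖Y ω - (2 : ℝ) • ∫ ω', Y ω' ∂μ‖ ∂μ) ^ 2
      ≤ ∫ ω, ‖Y ω - (2 : ℝ) • ∫ ω', Y ω' ∂μ‖ ^ 2 ∂μ :=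
        sq_integral_le_integral_sq (hY2.sub (memLp_const _)).norm
    _ = ∫ ω, ‖Y ω‖ ^ 2 ∂μ := integral_norm_sub_two_smul_integral_sq hY2
    _ ≤ ∫ _, B ^ 2 ∂μ := by
        refine integral_mono_ae (hY2.integrable_norm_pow two_ne_zero) (integrable_const _) ?_
        filter_upwards [hB] with ω hω using by gcongr
    _ = B ^ 2 := by simp

lemma norm_integral_mul_sub_two_mul_integral_mul_integral_le {X Y : Ω → ℂ} {A B : ℝ}
    (hX : AEStronglyMeasurable X μ) (hA : ∀ᵐ ω ∂μ, ‖X ω‖ ≤ A)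
    (hY : AEStronglyMeasurable Y μ) (hB : ∀ᵐ ω ∂μ, ‖Y ω‖ ≤ B) :
    ‖∫ ω, X ω * Y ω ∂μ - 2 * (∫ ω, X ω ∂μ) * ∫ ω, Y ω ∂μ‖ ≤ A * B := by
  have hA_nonneg : 0 ≤ A := by
    obtain ⟨ω, hω⟩ := hA.exists
    exact (norm_nonneg _).trans hω
  have hXint : Integrable X μ := .of_bound hX A hA
  have hYint : Integrable Y μ := .of_bound hY B hB
  have hcenter : ∫ ω, X ω * Y ω ∂μ - 2 * (∫ ω, X ω ∂μ) * ∫ ω, Y ω ∂μ =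
      ∫ ω, X ω * (Y ω - (2 : ℝ) • ∫ ω', Y ω' ∂μ) ∂μ := by
    simp_rw [mul_sub]
    rw [integral_sub (hYint.bdd_mul hX hA) (hXint.mul_const _), integral_mul_const]
    simp only [Complex.real_smul, Complex.ofReal_ofNat]
    ring
  rw [hcenter]
  calc ‖∫ ω, X ω * (Y ω - (2 : ℝ) • ∫ ω', Y ω' ∂μ) ∂μ‖
      ≤ ∫ ω, A * ‖Y ω - (2 : ℝ) • ∫ ω', Y ω' ∂μ‖ ∂μ := by
        refine norm_integral_le_of_norm_le
          ((hYint.sub (integrable_const _)).norm.const_mul A) ?_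
        filter_upwards [hA] with ω hω
        rw [norm_mul]
        gcongr
    _ = A * ∫ ω, ‖Y ω - (2 : ℝ) • ∫ ω', Y ω' ∂μ‖ ∂μ := integral_const_mul _ _
    _ ≤ A * B := by gcongr; exact integral_norm_sub_two_smul_integral_le hY hB

lemma norm_geom_sum_le_of_norm_le_one {α : Type*} [SeminormedRing α] [NormOneClass α] {u : α}
    (hu : ‖u‖ ≤ 1) (k : ℕ) : ‖∑ j ∈ range k, u ^ j‖ ≤ k := by
  have hpow (j : ℕ) : ‖u ^ j‖ ≤ 1 := (norm_pow_le u j).trans (pow_le_one₀ (norm_nonneg u) hu)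
  simpa using norm_sum_le_of_le (range k) fun j _ ↦ hpow j

lemma norm_mul_geom_sum_le_of_norm_le_one {α : Type*} [SeminormedRing α] [NormOneClass α] {u : α}
    (hu : ‖u‖ ≤ 1) (k : ℕ) : ‖u * ∑ j ∈ range k, u ^ j‖ ≤ k := by
  simpa using norm_mul_le_of_le hu (norm_geom_sum_le_of_norm_le_one hu k)

lemma sq_add_two_mul_sub_mul_geom_sum {α : Type*} [CommRing α] (u : α) (k : ℕ) :
    (u * ∑ j ∈ range k, u ^ j) ^ 2 + 2 * (u * ∑ j ∈ range k, u ^ j) -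
      u * ∑ j ∈ range (2 * k), u ^ j = (u * ∑ j ∈ range k, u ^ j) * ∑ j ∈ range k, u ^ j := by
  have hsplit : ∑ j ∈ range (2 * k), u ^ j = (1 + u ^ k) * ∑ j ∈ range k, u ^ j := by
    rw [two_mul, sum_range_add]
    simp [pow_add, ← mul_sum, add_mul]
  rw [hsplit]
  linear_combination (u * ∑ j ∈ range k, u ^ j) * mul_geom_sum u k

lemma norm_sq_sub_moment_sum_le {U : Ω → ℂ} (hU : AEStronglyMeasurable U μ)
    (hU_le : ∀ᵐ ω ∂μ, ‖U ω‖ ≤ 1) (k : ℕ) :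
    ‖(1 + 2 * ∫ ω, U ω * ∑ j ∈ range k, U ω ^ j ∂μ) ^ 2 -
      (1 + 2 * ∫ ω, U ω * ∑ j ∈ range (2 * k), U ω ^ j ∂μ)‖ ≤ 4 * (k : ℝ) ^ 2 := by
  let W (n : ℕ) (ω : Ω) : ℂ := ∑ j ∈ range n, U ω ^ j
  let V (n : ℕ) (ω : Ω) : ℂ := U ω * W n ω
  have hW (n : ℕ) : AEStronglyMeasurable (W n) μ := by fun_prop
  have hV (n : ℕ) : AEStronglyMeasurable (V n) μ := hU.mul (hW n)
  have hW_le (n : ℕ) : ∀ᵐ ω ∂μ, ‖W n ω‖ ≤ n := by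
    filter_upwards [hU_le] with ω hω using norm_geom_sum_le_of_norm_le_one hω n
  have hV_le (n : ℕ) : ∀ᵐ ω ∂μ, ‖V n ω‖ ≤ n := by
    filter_upwards [hU_le] with ω hω using norm_mul_geom_sum_le_of_norm_le_one hω n
  have hV_int (n : ℕ) : Integrable (V n) μ := .of_bound (hV n) n (hV_le n)
  have hVV_int : Integrable (fun ω ↦ V k ω * V k ω) μ := (hV_int k).bdd_mul (hV k) (hV_le k)
  have hVW : ∫ ω, V k ω * W k ω ∂μ =
      ∫ ω, V k ω * V k ω ∂μ + 2 * ∫ ω, V k ω ∂μ - ∫ ω, V (2 * k) ω ∂μ := by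
    rw [← integral_const_mul, ← integral_add hVV_int ((hV_int k).const_mul 2),
      ← integral_sub (by fun_prop) (hV_int _)]
    congr! 2 with ω
    rw [← sq]
    exact (sq_add_two_mul_sub_mul_geom_sum (U ω) k).symm
  have hVW_le : ‖∫ ω, V k ω * W k ω ∂μ‖ ≤ k * k := by
    refine (norm_integral_le_of_norm_le_const (C := k * k) ?_).trans (by simp)
    filter_upwards [hV_le k, hW_le k] with ω hVω hWω
    rw [norm_mul]
    gcongr
  have hVV_le := norm_integral_mul_sub_two_mul_integral_mul_integral_le
    (hV k) (hV_le k) (hV k) (hV_le k)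
  calc ‖(1 + 2 * ∫ ω, V k ω ∂μ) ^ 2 - (1 + 2 * ∫ ω, V (2 * k) ω ∂μ)‖
      = ‖2 * (∫ ω, V k ω * W k ω ∂μ -
          (∫ ω, V k ω * V k ω ∂μ - 2 * (∫ ω, V k ω ∂μ) * ∫ ω, V k ω ∂μ))‖ := by
        rw [hVW]; ring_nf
    _ ≤ 2 * (k * k + k * k) := by
        rw [norm_mul, Complex.norm_ofNat]
        gcongr
        exact norm_sub_le_of_le hVW_le hVV_le
    _ = 4 * (k : ℝ) ^ 2 := by ring

end Moments

section Caratheodory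

/-- `g` belongs to the Carathéodory class, with Taylor coefficients `p`: it is analytic on the unit
disc, `g 0 = 1`, and its real part is nonnegative there (equivalently positive, by the maximum
principle). The coefficients are a parameter because all estimates are about them. -/
structure IsCaratheodory (g : ℂ → ℂ) (p : ℕ → ℂ) : Prop where
  hasSum : ∀ z ∈ ball (0 : ℂ) 1, HasSum (fun n ↦ p n * z ^ n) (g z)
  coeff_zero : p 0 = 1
  re_nonneg : ∀ z ∈ ball (0 : ℂ) 1, 0 ≤ (g z).re

namespace IsCaratheodory

variable {g : ℂ → ℂ} {p : ℕ → ℂ} {T : ℝ} [Fact (0 < T)]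

lemma continuousOn (hg : IsCaratheodory g p) : ContinuousOn g (ball 0 1) := by
  have hseries := hasFPowerSeriesOnBall_ofScalars_of_hasSum one_pos hg.hasSum
  simpa [← Metric.eball_ofReal] using hseries.continuousOn

lemma exists_probabilityMeasure_of_radius (hg : IsCaratheodory g p) {r : ℝ}
    (hr : r ∈ Set.Ico 0 1) :
    ∃ ν : ProbabilityMeasure (AddCircle T), ∀ n : ℕ, n ≠ 0 →
      2 * ∫ t, fourier (-n) t ∂(ν : Measure (AddCircle T)) = p n * r ^ n := by
  let F (t : AddCircle T) : ℂ := g (r * toCircle t)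
  have hmem (t : AddCircle T) : r * (toCircle t : ℂ) ∈ ball (0 : ℂ) 1 := by
    simpa [Circle.norm_coe, abs_of_nonneg hr.1] using hr.2
  have hcont : Continuous F := hg.continuousOn.comp_continuous (by fun_prop) hmem
  have hint : Integrable F haarAddCircle :=
    hcont.integrable_of_hasCompactSupport (.of_compactSpace _)
  have hcoeff (n : ℤ) : fourierCoeff F n = if 0 ≤ n then p n.toNat * r ^ n.toNat else 0 :=
    fourierCoeff_comp_toCircle_of_hasSum hg.hasSum hr n
  obtain ⟨ν, hν⟩ := exists_probabilityMeasure_integral_fourier_eq_fourierCoeff hint.re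
    (fun t ↦ hg.re_nonneg _ (hmem t)) (by norm_num [fourierCoeff_re hint, hcoeff, hg.coeff_zero])
  refine ⟨ν, fun n hn ↦ ?_⟩
  simp [hν, fourierCoeff_re hint, hcoeff, hn, -fourier_apply]

theorem exists_probabilityMeasure (hg : IsCaratheodory g p) :
    ∃ ν : ProbabilityMeasure (AddCircle T), ∀ n : ℕ, n ≠ 0 →
      p n = 2 * ∫ t, fourier (-n) t ∂(ν : Measure (AddCircle T)) := by
  choose! ν hν using fun r hr ↦ hg.exists_probabilityMeasure_of_radius (T := T) (r := r) hr
  let 𝓤 : Ultrafilter ℝ := .of (𝓝[<] 1)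
  have h𝓤 : (𝓤 : Filter ℝ) ≤ 𝓝[<] 1 := Ultrafilter.of_le _
  have hlim : Tendsto ν 𝓤 (𝓝 (𝓤.map ν).lim) := (𝓤.map ν).le_nhds_lim
  refine ⟨(𝓤.map ν).lim, fun n hn ↦ ?_⟩
  have hmoment := ((ProbabilityMeasure.tendsto_iff_forall_integral_rclike_tendsto ℂ).mp hlim
    (.mkOfCompact (fourier (-n)))).const_mul 2
  have hradial : Tendsto (fun r : ℝ ↦ p n * (r : ℂ) ^ n) 𝓤 (𝓝 (p n)) := by
    have : ContinuousAt (fun r : ℝ ↦ p n * (r : ℂ) ^ n) 1 := by fun_prop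
    simpa using this.tendsto.mono_left (h𝓤.trans nhdsWithin_le_nhds)
  refine tendsto_nhds_unique (hradial.congr' ?_) hmoment
  filter_upwards [h𝓤 (Ico_mem_nhdsLT zero_lt_one)] with r hr using (hν r hr n hn).symm

lemma exists_sum_coeff_eq_integral_geom_sum (hg : IsCaratheodory g p) {d : ℕ} (hd : d ≠ 0) :
    ∃ ν : ProbabilityMeasure (AddCircle T), ∀ k : ℕ,
      ∑ j ∈ range (k + 1), p (d * j) =
        1 + 2 * ∫ t, fourier (-d) t * ∑ j ∈ range k, fourier (-d) t ^ j
          ∂(ν : Measure (AddCircle T)) := by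
  obtain ⟨ν, hν⟩ := hg.exists_probabilityMeasure (T := T)
  refine ⟨ν, fun k ↦ ?_⟩
  have hpow (j : ℕ) (t : AddCircle T) :
      fourier (-d) t * fourier (-d) t ^ j = fourier (-(d * (j + 1) : ℕ)) t := by
    rw [← pow_succ', fourier_apply, fourier_apply, ← Circle.coe_pow, ← toCircle_nsmul,
      ← natCast_zsmul, ← mul_zsmul]
    congr 3
    push_cast
    ring
  have hint (j : ℕ) : Integrable (fun t : AddCircle T ↦ fourier (-(d * (j + 1) : ℕ)) t)
      (ν : Measure (AddCircle T)) :=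
    (map_continuous _).integrable_of_hasCompactSupport (.of_compactSpace _)
  simp_rw [mul_sum, hpow]
  rw [integral_finsetSum _ fun j _ ↦ hint j, mul_sum, sum_range_succ', mul_zero, hg.coeff_zero,
    add_comm]
  congr! 2 with j
  exact hν _ (by positivity)

theorem norm_coeff_le_two (hg : IsCaratheodory g p) {n : ℕ} (hn : n ≠ 0) : ‖p n‖ ≤ 2 := by
  obtain ⟨ν, hν⟩ := hg.exists_probabilityMeasure (T := 1)
  have hmoment : ‖∫ t, fourier (-n) t ∂(ν : Measure (AddCircle (1 : ℝ)))‖ ≤ 1 := by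
    simpa using norm_integral_le_of_norm_le_const (μ := (ν : Measure (AddCircle (1 : ℝ))))
      (.of_forall fun t ↦ (Circle.norm_coe _).le)
  rw [hν n hn, norm_mul, Complex.norm_ofNat]
  linarith

theorem norm_sum_coeff_le (hg : IsCaratheodory g p) {d : ℕ} (hd : d ≠ 0) (k : ℕ) :
    ‖∑ j ∈ range (k + 1), p (d * j)‖ ≤ 2 * k + 1 := by
  have hsum : ‖∑ j ∈ range k, p (d * (j + 1))‖ ≤ ∑ _j ∈ range k, (2 : ℝ) :=
    norm_sum_le_of_le _ fun j _ ↦ hg.norm_coeff_le_two (by positivity)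
  rw [sum_range_succ', mul_zero, hg.coeff_zero]
  refine (norm_add_le_of_le hsum norm_one.le).trans_eq ?_
  simp [mul_comm]

theorem norm_sum_coeff_sq_sub_le (hg : IsCaratheodory g p) {d : ℕ} (hd : d ≠ 0) (k : ℕ) :
    ‖(∑ j ∈ range (k + 1), p (d * j)) ^ 2 - ∑ j ∈ range (2 * k + 1), p (d * j)‖ ≤
      4 * (k : ℝ) ^ 2 := by
  obtain ⟨ν, hν⟩ := hg.exists_sum_coeff_eq_integral_geom_sum (T := 1) hd
  rw [hν k, hν (2 * k)]
  exact norm_sq_sub_moment_sum_le (map_continuous _).aestronglyMeasurable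
    (.of_forall fun t ↦ by simp [Circle.norm_coe]) k

end IsCaratheodory

end Caratheodory

lemma sum_range_sub_shift {G : Type*} [AddCommGroup G] (b : ℕ → G) {d : ℕ} (hd : d ≠ 0) (k : ℕ) :
    ∑ j ∈ range (k + 1), (b (d * j) - if d ≤ d * j then b (d * j - d) else 0) = b (d * k) := by
  have hterm (j : ℕ) : (if d ≤ d * (j + 1) then b (d * (j + 1) - d) else 0) = b (d * j) := by
    simp [mul_add]
  simp_rw [sum_range_succ', hterm, sum_range_sub (fun j ↦ b (d * j))]
  simp [hd]

lemma norm_mul_sq_sub_le_of_norm_sq_sub_le {A B : ℂ} {x y μ : ℝ} (hA : ‖A‖ ≤ 1) (hy : 0 < y)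
    (hAB : ‖(x * A) ^ 2 - y * B‖ ≤ x ^ 2 - y) (hμ : x ^ 2 / y ≤ μ) :
    ‖μ * A ^ 2 - B‖ ≤ μ - 1 := by
  have hy' : (y : ℂ) ≠ 0 := by exact_mod_cast hy.ne'
  have hdecomp : μ * A ^ 2 - B =
      (μ - x ^ 2 / y : ℝ) * A ^ 2 + (y⁻¹ : ℝ) * ((x * A) ^ 2 - y * B) := by
    push_cast
    field_simp
    ring
  have hfirst : ‖((μ - x ^ 2 / y : ℝ) : ℂ) * A ^ 2‖ ≤ μ - x ^ 2 / y := by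
    rw [norm_mul, norm_pow, Complex.norm_of_nonneg (sub_nonneg.mpr hμ)]
    exact mul_le_of_le_one_right (sub_nonneg.mpr hμ) (pow_le_one₀ (norm_nonneg A) hA)
  have hsecond : ‖((y⁻¹ : ℝ) : ℂ) * ((x * A) ^ 2 - y * B)‖ ≤ y⁻¹ * (x ^ 2 - y) := by
    rw [norm_mul, Complex.norm_of_nonneg (by positivity)]
    gcongr
  calc ‖μ * A ^ 2 - B‖ ≤ (μ - x ^ 2 / y) + y⁻¹ * (x ^ 2 - y) :=
        hdecomp ▸ norm_add_le_of_le hfirst hsecond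
    _ = μ - 1 := by field_simp; ring

theorem zalcman_F2_zero_diagonal
    (f : ℂ → ℂ) (a : ℕ → ℂ)
    (ha0 : a 0 = 0) (ha1 : a 1 = 1)
    (hf : ∀ z ∈ Metric.ball (0 : ℂ) 1, HasSum (fun k => a k * z ^ k) (f z))
    (hre : ∀ z ∈ Metric.ball (0 : ℂ) 1, 0 < ((1 - z ^ 2) * deriv f z).re)
    (k : ℕ) (hk : 1 ≤ k) (μ : ℝ)
    (hμ : (2 * (k : ℝ) + 1) ^ 2 / (4 * (k : ℝ) + 1) ≤ μ) :
    ‖(μ : ℂ) * a (2 * k + 1) ^ 2 - a (4 * k + 1)‖ ≤ μ - 1 := by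
  let b (n : ℕ) : ℂ := (n + 1) * a (n + 1)
  have hcar : IsCaratheodory (fun z ↦ (1 - z ^ 2) * deriv f z)
      (fun n ↦ b n - if 2 ≤ n then b (n - 2) else 0) :=
    { hasSum := fun z hz ↦ hasSum_one_sub_pow_mul (hasSum_deriv_of_hasSum one_pos hf hz) 2
      coeff_zero := by simp [b, ha1]
      re_nonneg := fun z hz ↦ (hre z hz).le }
  have hodd : b (2 * k) = (2 * k + 1 : ℝ) * a (2 * k + 1) := by simp [b]
  have hdouble : b (2 * (2 * k)) = (4 * k + 1 : ℝ) * a (4 * k + 1) := by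
    norm_num [b, ← mul_assoc]
  have hodd_le := hcar.norm_sum_coeff_le two_ne_zero k
  have hdiff_le := hcar.norm_sum_coeff_sq_sub_le two_ne_zero k
  rw [sum_range_sub_shift b two_ne_zero, hodd] at hodd_le hdiff_le
  rw [sum_range_sub_shift b two_ne_zero, hdouble] at hdiff_le
  have ha_le : ‖a (2 * k + 1)‖ ≤ 1 := by
    rw [norm_mul, Complex.norm_of_nonneg (by positivity)] at hodd_le
    exact (mul_le_iff_le_one_right (by positivity)).mp hodd_le
  exact norm_mul_sq_sub_le_of_norm_sq_sub_le ha_le (by positivity)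
    (hdiff_le.trans_eq (by ring)) hμ
end

section
/- Fix a real number β < 1, and let f(z) = z + Σ_{n≥2} a_n zⁿ be analytic on the open unit disc 𝔻 with Re f′(z) > β for all z ∈ 𝔻. Then |a_n| ≤ 2(1−β)/n for every integer n ≥ 2. -/
/-!
Let `g` be holomorphic near a closed disc of radius `R` centred at `c`, and let `m ≥ 1`. Averaged
over the boundary circle, `(z - c)⁻ᵐ g(z)` gives the `m`-th Taylor coefficient of `g`, whereas
`(z - c)⁻ᵐ conj (g z)` gives `0`, because on the circle it is a multiple of the conjugate of
`(z - c)ᵐ g(z)`. Hence the coefficient is the average of `(z - c)⁻ᵐ · 2 Re g(z)`. If `Re g ≥ 0`,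
its norm is at most `R⁻ᵐ` times the average of `2 Re g`, which is `2 Re g(c)` by the mean value
property (Carathéodory's inequality). Apply this to `g = f' - β` and let `R` increase to `1`.
-/

open Complex Filter Metric Real Topology
open scoped ComplexConjugate ENNReal Nat

theorem hasFPowerSeriesOnBall_of_hasSum {𝕜 E : Type*} [RCLike 𝕜] [NormedAddCommGroup E]
    [NormedSpace 𝕜 E] {f : 𝕜 → E} {p : FormalMultilinearSeries 𝕜 𝕜 E} {c : 𝕜} {R : ℝ} (hR : 0 < R)
    (hf : ∀ z ∈ ball (0 : 𝕜) R, HasSum (fun k => z ^ k • p.coeff k) (f (c + z))) :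
    HasFPowerSeriesOnBall f p c (ENNReal.ofReal R) where
  r_le := by
    refine ENNReal.le_of_forall_nnreal_lt fun r hr => ?_
    have hrR : (r : ℝ) < R := by simpa [ENNReal.ofReal, Real.lt_toNNReal_iff_coe_lt] using hr
    have hterms := (hf ((r : ℝ) : 𝕜) (by simpa using hrR)).summable.tendsto_atTop_zero.norm
    refine p.le_radius_of_tendsto (l := 0) ?_
    simpa [norm_smul, mul_comm] using hterms
  r_pos := ENNReal.ofReal_pos.2 hR
  hasSum {z} hz := by
    rw [eball_ofReal] at hz
    simpa using hf z hz

theorem iteratedDeriv_eq_factorial_smul_coeff {𝕜 E : Type*} [NontriviallyNormedField 𝕜]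
    [NormedAddCommGroup E] [NormedSpace 𝕜 E] [CompleteSpace E] {f : 𝕜 → E}
    {p : FormalMultilinearSeries 𝕜 𝕜 E} {c : 𝕜} {r : ℝ≥0∞}
    (hf : HasFPowerSeriesOnBall f p c r) (n : ℕ) :
    iteratedDeriv n f c = n ! • p.coeff n := by
  have h := hf.factorial_smul 1 n
  rw [iteratedFDeriv_apply_eq_iteratedDeriv_mul_prod] at h
  simpa using h.symm

theorem norm_circleAverage_le_circleAverage_norm {E : Type*} [NormedAddCommGroup E]
    [NormedSpace ℝ E] (f : ℂ → E) (c : ℂ) (R : ℝ) :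
    ‖circleAverage f c R‖ ≤ circleAverage (fun z => ‖f z‖) c R := by
  rw [circleAverage_def, circleAverage_def, norm_smul, norm_of_nonneg (by positivity), smul_eq_mul]
  gcongr
  exact intervalIntegral.norm_integral_le_integral_norm two_pi_pos.le

section CircleAverage

variable {E : Type*} [NormedAddCommGroup E] [NormedSpace ℂ E] {c : ℂ} {R : ℝ} {m : ℕ}

theorem circleAverage_sub_pow_smul_eq_zero [CompleteSpace E] {g : ℂ → E} (hm : m ≠ 0)
    (hg : DiffContOnCl ℂ g (ball c |R|)) :
    circleAverage (fun z => (z - c) ^ m • g z) c R = 0 := by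
  have hpow : Differentiable ℂ fun z : ℂ => (z - c) ^ m := by fun_prop
  rw [(hpow.diffContOnCl.smul hg).circleAverage]
  simp [hm]

theorem circleAverage_inv_sub_pow_smul [CompleteSpace E] {g : ℂ → E} (hR : 0 < R) (m : ℕ)
    (hg : DiffContOnCl ℂ g (ball c R)) :
    circleAverage (fun z => ((z - c) ^ m)⁻¹ • g z) c R = (m ! : ℂ)⁻¹ • iteratedDeriv m g c := by
  have hintegrand (z : ℂ) :
      (z - c)⁻¹ • ((z - c) ^ m)⁻¹ • g z = (1 / (z - c) ^ (m + 1)) • g z := by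
    rw [smul_smul, ← mul_inv, ← pow_succ', one_div]
  simp_rw [circleAverage_eq_circleIntegral hR.ne', hintegrand,
    hg.circleIntegral_one_div_sub_center_pow_smul hR m, smul_smul]
  congr 1
  field_simp [two_pi_I_ne_zero]

variable {g : ℂ → ℂ}

theorem circleAverage_re_eq (hg : DiffContOnCl ℂ g (ball c |R|)) :
    circleAverage (fun z => (g z).re) c R = (g c).re := by
  have hcont : ContinuousOn g (sphere c |R|) := hg.continuousOn_ball.mono sphere_subset_closedBall
  rw [← hg.circleAverage]
  exact reCLM.circleAverage_comp_comm hcont.circleIntegrable'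

theorem circleAverage_conj {f : ℂ → ℂ} (hf : CircleIntegrable f c R) :
    circleAverage (fun z => conj (f z)) c R = conj (circleAverage f c R) :=
  (conjCLE : ℂ →L[ℝ] ℂ).circleAverage_comp_comm hf

theorem inv_sub_pow_mul_conj_eq_of_mem_sphere {z : ℂ} (hz : z ∈ sphere c |R|) (m : ℕ) (w : ℂ) :
    ((z - c) ^ m)⁻¹ * conj w = (((R ^ m) ^ 2)⁻¹ : ℝ) • conj ((z - c) ^ m * w) := by
  have hnormSq : normSq ((z - c) ^ m) = (R ^ m) ^ 2 := by
    rw [normSq_eq_norm_sq, norm_pow, mem_sphere_iff_norm.1 hz, ← abs_pow, sq_abs]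
  rw [Complex.inv_def, hnormSq, real_smul, map_mul]
  ring

theorem circleAverage_inv_sub_pow_mul_conj_eq_zero (hm : m ≠ 0)
    (hg : DiffContOnCl ℂ g (ball c |R|)) :
    circleAverage (fun z => ((z - c) ^ m)⁻¹ * conj (g z)) c R = 0 := by
  have hcont : ContinuousOn (fun z => (z - c) ^ m * g z) (sphere c |R|) :=
    .mul (by fun_prop) (hg.continuousOn_ball.mono sphere_subset_closedBall)
  have havg : circleAverage (fun z => (z - c) ^ m * g z) c R = 0 :=
    circleAverage_sub_pow_smul_eq_zero hm hg
  rw [circleAverage_congr_sphere fun z hz => inv_sub_pow_mul_conj_eq_of_mem_sphere hz m (g z),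
    circleAverage_fun_smul, circleAverage_conj hcont.circleIntegrable', havg, map_zero, smul_zero]

theorem circleAverage_inv_sub_pow_mul_two_re (hR : 0 < R) (hm : m ≠ 0)
    (hg : DiffContOnCl ℂ g (ball c R)) :
    circleAverage (fun z => ((z - c) ^ m)⁻¹ * (2 * (g z).re : ℝ)) c R =
      (m ! : ℂ)⁻¹ * iteratedDeriv m g c := by
  have hcont : ContinuousOn g (sphere c R) := hg.continuousOn_ball.mono sphere_subset_closedBall
  have hinv : ContinuousOn (fun z => ((z - c) ^ m)⁻¹) (sphere c R) :=
    .inv₀ (by fun_prop) fun z hz => pow_ne_zero m (sub_ne_zero.2 (ne_of_mem_sphere hz hR.ne'))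
  have hint : CircleIntegrable (fun z => ((z - c) ^ m)⁻¹ * g z) c R :=
    (hinv.mul hcont).circleIntegrable hR.le
  have hint_conj : CircleIntegrable (fun z => ((z - c) ^ m)⁻¹ * conj (g z)) c R :=
    (hinv.mul (continuous_conj.comp_continuousOn hcont)).circleIntegrable hR.le
  simp_rw [← add_conj, mul_add]
  rw [circleAverage_fun_add hint hint_conj,
    circleAverage_inv_sub_pow_mul_conj_eq_zero hm (by rwa [abs_of_pos hR]), add_zero]
  exact circleAverage_inv_sub_pow_smul hR m hg

end CircleAverage

section Caratheodory

variable {g : ℂ → ℂ} {c : ℂ} {R : ℝ} {m : ℕ}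

theorem norm_iteratedDeriv_le_of_forall_mem_sphere_re_nonneg (hR : 0 < R) (hm : m ≠ 0)
    (hg : DiffContOnCl ℂ g (ball c R)) (hre : ∀ z ∈ sphere c R, 0 ≤ (g z).re) :
    ‖iteratedDeriv m g c‖ ≤ m ! * (2 * (g c).re) / R ^ m := by
  have hnorm : Set.EqOn (fun z => ‖((z - c) ^ m)⁻¹ * (2 * (g z).re : ℝ)‖)
      (fun z => (2 / R ^ m) • (g z).re) (sphere c |R|) := fun z hz => by
    rw [abs_of_pos hR] at hz
    beta_reduce
    rw [norm_mul, norm_inv, norm_pow, mem_sphere_iff_norm.1 hz, norm_real,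
      norm_of_nonneg (mul_nonneg zero_le_two (hre z hz)), smul_eq_mul]
    ring
  have hcoeff : ‖(m ! : ℂ)⁻¹ * iteratedDeriv m g c‖ ≤ 2 / R ^ m * (g c).re := calc
    _ = ‖circleAverage (fun z => ((z - c) ^ m)⁻¹ * (2 * (g z).re : ℝ)) c R‖ := by
      rw [circleAverage_inv_sub_pow_mul_two_re hR hm hg]
    _ ≤ circleAverage (fun z => ‖((z - c) ^ m)⁻¹ * (2 * (g z).re : ℝ)‖) c R :=
      norm_circleAverage_le_circleAverage_norm _ _ _
    _ = 2 / R ^ m * (g c).re := by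
      rw [circleAverage_congr_sphere hnorm, circleAverage_fun_smul,
        circleAverage_re_eq (by rwa [abs_of_pos hR]), smul_eq_mul]
  rw [norm_mul, norm_inv, Complex.norm_natCast, inv_mul_le_iff₀ (by positivity)] at hcoeff
  exact hcoeff.trans_eq (by ring)

theorem norm_iteratedDeriv_le_of_forall_mem_ball_re_nonneg (hR : 0 < R) (hm : m ≠ 0)
    (hg : DifferentiableOn ℂ g (ball c R)) (hre : ∀ z ∈ ball c R, 0 ≤ (g z).re) :
    ‖iteratedDeriv m g c‖ ≤ m ! * (2 * (g c).re) / R ^ m := by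
  have hlim : Tendsto (fun r : ℝ => m ! * (2 * (g c).re) / r ^ m) (𝓝[<] R)
      (𝓝 (m ! * (2 * (g c).re) / R ^ m)) :=
    (tendsto_const_nhds.div (tendsto_id.pow m) (pow_ne_zero m hR.ne')).mono_left
      nhdsWithin_le_nhds
  refine ge_of_tendsto hlim ?_
  filter_upwards [Ioo_mem_nhdsLT hR] with r ⟨hr, hrR⟩
  have hsub : closedBall c r ⊆ ball c R := closedBall_subset_ball hrR
  exact norm_iteratedDeriv_le_of_forall_mem_sphere_re_nonneg hr hm (hg.diffContOnCl_ball hsub)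
    fun z hz => hre z (hsub (sphere_subset_closedBall hz))

theorem norm_iteratedDeriv_le_of_forall_mem_ball_le_re {β : ℝ} (hR : 0 < R) (hm : m ≠ 0)
    (hg : DifferentiableOn ℂ g (ball c R)) (hre : ∀ z ∈ ball c R, β ≤ (g z).re) :
    ‖iteratedDeriv m g c‖ ≤ m ! * (2 * ((g c).re - β)) / R ^ m := by
  have hshift : iteratedDeriv m (fun z => -(β : ℂ) + g z) c = iteratedDeriv m g c :=
    iteratedDeriv_const_add (Nat.pos_of_ne_zero hm) _
  have hbound := norm_iteratedDeriv_le_of_forall_mem_ball_re_nonneg hR hm (hg.const_add (-(β : ℂ)))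
    fun z hz => by simpa using hre z hz
  rw [hshift] at hbound
  simpa [neg_add_eq_sub] using hbound

end Caratheodory

theorem coeff_bound_Rbeta_general {β R : ℝ} {f : ℂ → ℂ} {a : ℕ → ℂ} {c : ℂ} (hR : 0 < R)
    (hf : ∀ z ∈ ball c R, HasSum (fun k => a k * (z - c) ^ k) (f z))
    (hre : ∀ z ∈ ball c R, β ≤ (deriv f z).re) {n : ℕ} (hn : 2 ≤ n) :
    ‖a n‖ ≤ 2 * ((a 1).re - β) / (n * R ^ (n - 1)) := by
  obtain ⟨m, rfl⟩ : ∃ m, n = m + 1 := ⟨n - 1, by lia⟩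
  have hseries : HasFPowerSeriesOnBall f (.ofScalars ℂ a) c (.ofReal R) :=
    hasFPowerSeriesOnBall_of_hasSum hR fun z hz => by
      simpa [mul_comm] using hf (c + z) (by simpa using hz)
  have hcoeff (k : ℕ) : iteratedDeriv k f c = k ! * a k := by
    simpa using iteratedDeriv_eq_factorial_smul_coeff hseries k
  have hdiff : DifferentiableOn ℂ f (ball c R) := eball_ofReal (x := c) ▸ hseries.differentiableOn
  have hderiv : deriv f c = a 1 := by simpa using hcoeff 1
  have hbound : ((m + 1)! : ℝ) * ‖a (m + 1)‖ ≤ m ! * (2 * ((a 1).re - β)) / R ^ m := by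
    simpa only [← iteratedDeriv_succ', hcoeff, hderiv, norm_mul, Complex.norm_natCast] using
      norm_iteratedDeriv_le_of_forall_mem_ball_le_re (m := m) hR (by lia)
        (hdiff.deriv isOpen_ball) hre
  rw [le_div_iff₀ (by positivity), Nat.factorial_succ, Nat.cast_mul] at hbound
  rw [Nat.add_sub_cancel, le_div_iff₀ (by positivity)]
  refine le_of_mul_le_mul_left ?_ (Nat.cast_pos.2 m.factorial_pos)
  linarith

theorem coeff_bound_Rbeta
    (β : ℝ) (hβ : β < 1) (f : ℂ → ℂ) (a : ℕ → ℂ)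
    (ha0 : a 0 = 0) (ha1 : a 1 = 1)
    (hf : ∀ z ∈ Metric.ball (0 : ℂ) 1, HasSum (fun k => a k * z ^ k) (f z))
    (hre : ∀ z ∈ Metric.ball (0 : ℂ) 1, β < (deriv f z).re)
    (n : ℕ) (hn : 2 ≤ n) :
    ‖a n‖ ≤ 2 * (1 - β) / (n : ℝ) := by
  simpa [ha1] using coeff_bound_Rbeta_general (a := a) one_pos
    (by simpa using hf) (fun z hz => (hre z hz).le) hn
end

section
/- Fix a real number α < 1 and for n ≥ 2 set A_n = (1/(n−1)!)·∏_{j=0}^{n−2} (2(1−α)+j). Suppose the complex numbers (a_n)_{n≥2} satisfy a_n = A_n · ∫₀^{2π} e^{i(n−1)t} dν(t) for all n ≥ 2, for some probability measure ν on [0,2π]. Then for every real λ and all integers n ≥ 2: |λ a_n² − a_{2n−1}| ≤ A_{2n−1} whenever 0 ≤ λ ≤ 2A_{2n−1}/A_n², and |λ a_n² − a_{2n−1}| ≤ |λ A_n² − A_{2n−1}| whenever λ < 0 or λ > 2A_{2n−1}/A_n². -/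
open MeasureTheory

/-!
Write `c = ∫ u` and `d = ∫ u ^ 2` with `‖u‖ ≤ 1`. Since `d - c ^ 2 = ∫ (u - c) ^ 2`, its norm is
at most the variance `∫ ‖u‖ ^ 2 - ‖c‖ ^ 2`, hence `‖2 c ^ 2 - d‖ ≤ 1`; also `‖d‖ ≤ 1`. Splitting
`x c ^ 2 - y d = (x / 2) (2 c ^ 2 - d) + ((x - 2 y) / 2) d` gives
`‖x c ^ 2 - y d‖ ≤ (|x| + |x - 2 y|) / 2 = max |y| |x - y|`, and the two ranges of the parameter
decide which of the two terms is the maximum.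
-/

theorem norm_smul_sub_smul_le_max_mul {E : Type*} [SeminormedAddCommGroup E] [NormedSpace ℝ E]
    {v w : E} {C : ℝ} (hvw : ‖(2 : ℝ) • v - w‖ ≤ C) (hw : ‖w‖ ≤ C) (x y : ℝ) :
    ‖x • v - y • w‖ ≤ max |y| |x - y| * C := by
  have hC : 0 ≤ C := (norm_nonneg w).trans hw
  have hmax : |x / 2| + |x / 2 - y| ≤ max |y| |x - y| := by grind
  calc ‖x • v - y • w‖
      = ‖(x / 2) • ((2 : ℝ) • v - w) + (x / 2 - y) • w‖ := by congr 1; module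
    _ ≤ |x / 2| * ‖(2 : ℝ) • v - w‖ + |x / 2 - y| * ‖w‖ := by
        simpa only [norm_smul, Real.norm_eq_abs] using
          norm_add_le ((x / 2) • ((2 : ℝ) • v - w)) ((x / 2 - y) • w)
    _ ≤ |x / 2| * C + |x / 2 - y| * C := by gcongr
    _ = (|x / 2| + |x / 2 - y|) * C := by ring
    _ ≤ max |y| |x - y| * C := by gcongr

section SecondMoment

variable {X : Type*} [MeasurableSpace X] {μ : Measure X}

theorem norm_integral_sq_le {𝕜 : Type*} [RCLike 𝕜] (u : X → 𝕜) :
    ‖∫ x, u x ^ 2 ∂μ‖ ≤ ∫ x, ‖u x‖ ^ 2 ∂μ :=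
  (norm_integral_le_integral_norm _).trans_eq (by simp only [norm_pow])

variable [IsProbabilityMeasure μ]

theorem integral_norm_sub_integral_sq {E : Type*} [NormedAddCommGroup E] [InnerProductSpace ℝ E]
    [CompleteSpace E] {u : X → E} (hu : MemLp u 2 μ) :
    ∫ x, ‖u x - ∫ y, u y ∂μ‖ ^ 2 ∂μ = ∫ x, ‖u x‖ ^ 2 ∂μ - ‖∫ x, u x ∂μ‖ ^ 2 := by
  set c := ∫ x, u x ∂μ
  have hu₁ : Integrable u μ := hu.integrable one_le_two
  have hu₂ : Integrable (fun x ↦ ‖u x‖ ^ 2) μ := hu.integrable_norm_pow two_ne_zero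
  have hinner : Integrable (fun x ↦ 2 * inner ℝ c (u x)) μ := (hu₁.const_inner c).const_mul 2
  calc ∫ x, ‖u x - c‖ ^ 2 ∂μ
      = ∫ x, (‖u x‖ ^ 2 - 2 * inner ℝ c (u x) + ‖c‖ ^ 2) ∂μ := by
        simp only [norm_sub_sq_real, real_inner_comm]
    _ = ∫ x, ‖u x‖ ^ 2 ∂μ - 2 * inner ℝ c c + ‖c‖ ^ 2 := by
        rw [integral_add (by fun_prop) (integrable_const _), integral_sub hu₂ hinner,
          integral_const_mul, integral_inner hu₁, integral_const, probReal_univ, one_smul]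
    _ = ∫ x, ‖u x‖ ^ 2 ∂μ - ‖c‖ ^ 2 := by rw [real_inner_self_eq_norm_sq]; ring

variable {𝕜 : Type*} [RCLike 𝕜] {u : X → 𝕜}

theorem integral_sub_integral_sq (hu : MemLp u 2 μ) :
    ∫ x, (u x - ∫ y, u y ∂μ) ^ 2 ∂μ = ∫ x, u x ^ 2 ∂μ - (∫ x, u x ∂μ) ^ 2 := by
  set c := ∫ x, u x ∂μ
  have hu₁ : Integrable u μ := hu.integrable one_le_two
  have hu₂ : Integrable (fun x ↦ u x ^ 2) μ := by
    simpa only [Pi.mul_def, sq] using hu.integrable_mul hu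
  have hlin : Integrable (fun x ↦ 2 * c * u x) μ := hu₁.const_mul (2 * c)
  calc ∫ x, (u x - c) ^ 2 ∂μ
      = ∫ x, (u x ^ 2 - 2 * c * u x + c ^ 2) ∂μ := by congr with x; ring
    _ = ∫ x, u x ^ 2 ∂μ - 2 * c * c + c ^ 2 := by
        rw [integral_add (by fun_prop) (integrable_const _), integral_sub hu₂ hlin,
          integral_const_mul, integral_const, probReal_univ, one_smul]
    _ = ∫ x, u x ^ 2 ∂μ - c ^ 2 := by ring

theorem norm_integral_sq_sub_sq_integral_le (hu : MemLp u 2 μ) :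
    ‖∫ x, u x ^ 2 ∂μ - (∫ x, u x ∂μ) ^ 2‖ ≤ ∫ x, ‖u x‖ ^ 2 ∂μ - ‖∫ x, u x ∂μ‖ ^ 2 := by
  rw [← integral_sub_integral_sq hu, ← integral_norm_sub_integral_sq hu]
  exact norm_integral_sq_le _

theorem norm_two_mul_sq_integral_sub_integral_sq_le (hu : MemLp u 2 μ) :
    ‖2 * (∫ x, u x ∂μ) ^ 2 - ∫ x, u x ^ 2 ∂μ‖ ≤ ∫ x, ‖u x‖ ^ 2 ∂μ := by
  set c := ∫ x, u x ∂μ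
  calc ‖2 * c ^ 2 - ∫ x, u x ^ 2 ∂μ‖
      = ‖c ^ 2 - (∫ x, u x ^ 2 ∂μ - c ^ 2)‖ := by congr 1; ring
    _ ≤ ‖c‖ ^ 2 + ‖∫ x, u x ^ 2 ∂μ - c ^ 2‖ := norm_pow c 2 ▸ norm_sub_le _ _
    _ ≤ ‖c‖ ^ 2 + (∫ x, ‖u x‖ ^ 2 ∂μ - ‖c‖ ^ 2) := by
        gcongr; exact norm_integral_sq_sub_sq_integral_le hu
    _ = ∫ x, ‖u x‖ ^ 2 ∂μ := by ring

theorem norm_smul_sq_integral_sub_smul_integral_sq_le (hu : MemLp u 2 μ) (x y : ℝ) :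
    ‖x • (∫ t, u t ∂μ) ^ 2 - y • ∫ t, u t ^ 2 ∂μ‖ ≤
      max |y| |x - y| * ∫ t, ‖u t‖ ^ 2 ∂μ :=
  norm_smul_sub_smul_le_max_mul
    (by simpa only [ofNat_smul_eq_nsmul, nsmul_eq_mul, Nat.cast_ofNat] using
      norm_two_mul_sq_integral_sub_integral_sq_le hu)
    (norm_integral_sq_le u) x y

end SecondMoment

theorem prod_range_add_natCast_div_factorial_pos {s : ℝ} (hs : 0 < s) (k : ℕ) :
    0 < (∏ j ∈ Finset.range k, (s + (j : ℝ))) / (k.factorial : ℝ) :=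
  div_pos (Finset.prod_pos fun _ _ ↦ by positivity) (by positivity)

theorem max_abs_abs_mul_sub_eq_left {p q l : ℝ} (hp : 0 < p) (hl : 0 ≤ l) (hlq : l ≤ 2 * q / p) :
    max |q| |l * p - q| = q := by
  rw [le_div_iff₀ hp] at hlq
  have : 0 ≤ l * p := by positivity
  grind

theorem max_abs_abs_mul_sub_eq_right {p q l : ℝ} (hp : 0 < p) (hq : 0 ≤ q)
    (hl : l < 0 ∨ 2 * q / p < l) : max |q| |l * p - q| = |l * p - q| := by
  rw [div_lt_iff₀ hp] at hl
  have : l < 0 → l * p < 0 := fun hl ↦ mul_neg_of_neg_of_pos hl hp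
  grind

theorem zalcman_hull_starlike_diagonal_general {X : Type*} [MeasurableSpace X]
    {μ : Measure X} [IsProbabilityMeasure μ] {u : X → ℂ} (hu : AEStronglyMeasurable u μ)
    (hu_le : ∀ᵐ x ∂μ, ‖u x‖ ≤ 1) {A : ℕ → ℝ} {a : ℕ → ℂ}
    (ha : ∀ n, 2 ≤ n → a n = A n * ∫ x, u x ^ (n - 1) ∂μ) (lam : ℝ) {n : ℕ} (hn : 2 ≤ n) :
    ‖(lam : ℂ) * a n ^ 2 - a (2 * n - 1)‖ ≤
      max |A (2 * n - 1)| |lam * A n ^ 2 - A (2 * n - 1)| := by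
  have hpow_le : ∀ᵐ x ∂μ, ‖u x ^ (n - 1)‖ ≤ 1 := by
    filter_upwards [hu_le] with x hx
    simpa only [norm_pow] using pow_le_one₀ (norm_nonneg _) hx
  have hpow : MemLp (fun x ↦ u x ^ (n - 1)) 2 μ := .of_bound (hu.pow _) 1 hpow_le
  have hmoment : ∫ x, ‖u x ^ (n - 1)‖ ^ 2 ∂μ ≤ 1 := by
    simpa using integral_mono_ae (hpow.integrable_norm_pow two_ne_zero)
      (integrable_const (1 : ℝ)) (hpow_le.mono fun x hx ↦ pow_le_one₀ (norm_nonneg _) hx)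
  have hexponent : 2 * n - 1 - 1 = (n - 1) * 2 := by omega
  rw [ha n hn, ha (2 * n - 1) (by omega), hexponent]
  simp only [pow_mul]
  calc _ = ‖(lam * A n ^ 2) • (∫ x, u x ^ (n - 1) ∂μ) ^ 2 -
          A (2 * n - 1) • ∫ x, (u x ^ (n - 1)) ^ 2 ∂μ‖ := by
        simp only [Complex.real_smul]; push_cast; ring_nf
    _ ≤ max |A (2 * n - 1)| |lam * A n ^ 2 - A (2 * n - 1)| * ∫ x, ‖u x ^ (n - 1)‖ ^ 2 ∂μ :=
        norm_smul_sq_integral_sub_smul_integral_sq_le hpow _ _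
    _ ≤ max |A (2 * n - 1)| |lam * A n ^ 2 - A (2 * n - 1)| :=
        mul_le_of_le_one_right (by positivity) hmoment

theorem zalcman_hull_starlike_diagonal
    (α : ℝ) (hα : α < 1) (A : ℕ → ℝ)
    (hA : ∀ n, A n = (∏ j ∈ Finset.range (n - 1), (2 * (1 - α) + (j : ℝ))) /
      (Nat.factorial (n - 1) : ℝ))
    (ν : Measure (Set.Icc (0 : ℝ) (2 * Real.pi))) [IsProbabilityMeasure ν]
    (a : ℕ → ℂ)
    (ha : ∀ n, 2 ≤ n →
      a n = (A n : ℂ) * ∫ t, Complex.exp (Complex.I * (n - 1 : ℕ) * ((t : ℝ) : ℂ)) ∂ν)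
    (lam : ℝ) (n : ℕ) (hn : 2 ≤ n) :
    (0 ≤ lam ∧ lam ≤ 2 * A (2 * n - 1) / (A n ^ 2) →
      ‖(lam : ℂ) * a n ^ 2 - a (2 * n - 1)‖ ≤ A (2 * n - 1)) ∧
    (lam < 0 ∨ 2 * A (2 * n - 1) / (A n ^ 2) < lam →
      ‖(lam : ℂ) * a n ^ 2 - a (2 * n - 1)‖ ≤ |lam * A n ^ 2 - A (2 * n - 1)|) := by
  have hA_pos (m : ℕ) : 0 < A m :=
    hA m ▸ prod_range_add_natCast_div_factorial_pos (by linarith) (m - 1)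
  have hexp (m : ℕ) (t : ℝ) :
      Complex.exp (Complex.I * m * t) = Complex.exp (Complex.I * t) ^ m := by
    rw [← Complex.exp_nat_mul]; ring_nf
  simp only [hexp] at ha
  have hbound := zalcman_hull_starlike_diagonal_general (μ := ν)
    (Continuous.aestronglyMeasurable (by fun_prop))
    (.of_forall fun t ↦ (Complex.norm_exp_I_mul_ofReal t).le) ha lam hn
  have hsq : 0 < A n ^ 2 := pow_pos (hA_pos n) 2
  exact ⟨fun h ↦ hbound.trans_eq (max_abs_abs_mul_sub_eq_left hsq h.1 h.2),
    fun h ↦ hbound.trans_eq (max_abs_abs_mul_sub_eq_right hsq (hA_pos (2 * n - 1)).le h)⟩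
end
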